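/- Let n ≥ 1 and let w be a permutation of [n]. The Schubert polynomial S_w(x) equals Max_w(x) if and only if w avoids the permutation patterns 1432 and 1423. -/

import Mathlib

open MvPolynomial

/-- Gale order: `C ≤ D` iff same cardinality and for each `k`, the `k`-th least element of `C`
is at most the `k`-th least element of `D`. -/
def GaleLE {n : ℕ} (C D : Finset (Fin n)) : Prop :=
  C.card = D.card ∧ ∀ (k : ℕ) (hC : k < C.card) (hD : k < D.card),
    (C.orderIsoOfFin rfl ⟨k, hC⟩ : Fin n) ≤ (D.orderIsoOfFin rfl ⟨k, hD⟩ : Fin n)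

/-- `C ≤ D` for diagrams: columnwise Gale order. -/
def DiagramLE {n : ℕ} (C D : Fin n → Finset (Fin n)) : Prop := ∀ j, GaleLE (C j) (D j)

/-- The Rothe diagram of a permutation `w` (0-indexed): column `j` consists of the rows `i`
with `w i > j` and `i < w⁻¹ j`. -/
def rothe {n : ℕ} (w : Equiv.Perm (Fin n)) (j : Fin n) : Finset (Fin n) :=
  Finset.univ.filter fun i => j < w i ∧ i < w.symm j

/-- The monomial `x^C = ∏_j ∏_{i ∈ C_j} x_i` of a diagram `C`. -/
noncomputable def xDiagram {n : ℕ} (C : Fin n → Finset (Fin n)) : MvPolynomial (Fin n) ℤ :=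
  ∏ j, ∏ i ∈ C j, X i

/- `Max_D(x) = ∑_{C ≤ D} x^C`, summed over all diagrams `C` with `C ≤ D`. -/
open scoped Classical in
noncomputable def MaxPoly {n : ℕ} (D : Fin n → Finset (Fin n)) : MvPolynomial (Fin n) ℤ :=
  ∑ C ∈ Finset.univ.filter (fun C : Fin n → Finset (Fin n) => DiagramLE C D), xDiagram C

/-- `S` is the family of Schubert polynomials: `S_{w₀} = x_1^{n-1} ⋯ x_{n-1}` for the longest
permutation `w₀` (i.e. `Fin.revPerm`), and whenever `w_i < w_{i+1}`,
`S_w = ∂_i S_{w s_i}`, expressed denominator-free as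
`(x_i - x_{i+1}) S_w = S_{w s_i} - s_i · S_{w s_i}`. -/
def IsSchubertFamily {n : ℕ} (S : Equiv.Perm (Fin n) → MvPolynomial (Fin n) ℤ) : Prop :=
  S Fin.revPerm = (∏ i : Fin n, X i ^ (n - 1 - (i : ℕ))) ∧
  ∀ (w : Equiv.Perm (Fin n)) (i j : Fin n), (i : ℕ) + 1 = (j : ℕ) → w i < w j →
    (X i - X j) * S w =
      S (w * Equiv.swap i j) - rename (Equiv.swap i j) (S (w * Equiv.swap i j))

/-- `w` contains the pattern `π`: there is a strictly increasing choice of positions on which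
`w` is order isomorphic to `π`. -/
def ContainsPattern {n m : ℕ} (w : Equiv.Perm (Fin n)) (π : Fin m → ℕ) : Prop :=
  ∃ f : Fin m ↪o Fin n, ∀ s t : Fin m, π s < π t ↔ w (f s) < w (f t)

/-- `w` avoids the pattern `π`. -/
def AvoidsPattern {n m : ℕ} (w : Equiv.Perm (Fin n)) (π : Fin m → ℕ) : Prop :=
  ¬ ContainsPattern w π

/-! ## Basic notions -/

open Finset in
/-- number of elements of `C` below `t` -/
def cnt {n : ℕ} (C : Finset (Fin n)) (t : ℕ) : ℕ := (C.filter (fun x => x.val < t)).card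

theorem galeLE_iff {n : ℕ} (C D : Finset (Fin n)) :
    GaleLE C D ↔ C.card = D.card ∧ ∀ t : ℕ, cnt D t ≤ cnt C t := by
  unfold GaleLE cnt
  constructor
  · rintro ⟨hc, h⟩
    refine ⟨hc, fun t => ?_⟩
    refine Finset.card_le_card_of_injOn
      (fun d => if hd : d ∈ D then
        (C.orderIsoOfFin rfl ⟨((D.orderIsoOfFin rfl).symm ⟨d, hd⟩).val,
          lt_of_lt_of_eq ((D.orderIsoOfFin rfl).symm ⟨d, hd⟩).isLt hc.symm⟩ : Fin n) else d) ?_ ?_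
    · intro d hd
      simp only [Finset.coe_filter, Set.mem_ofPred_eq] at hd ⊢
      obtain ⟨hd, hlt⟩ := hd
      simp only [hd, dif_pos]
      refine ⟨Subtype.prop _, ?_⟩
      have := h ((D.orderIsoOfFin rfl).symm ⟨d, hd⟩).val
        (lt_of_lt_of_eq ((D.orderIsoOfFin rfl).symm ⟨d, hd⟩).isLt hc.symm)
        ((D.orderIsoOfFin rfl).symm ⟨d, hd⟩).isLt
      simp only [Fin.eta, OrderIso.apply_symm_apply] at this
      exact lt_of_le_of_lt this hlt
    · intro d hd e he hde
      simp only [Finset.coe_filter, Set.mem_ofPred_eq] at hd he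
      simp only [hd.1, he.1, dif_pos] at hde
      have h1 := (C.orderIsoOfFin rfl).injective (Subtype.ext hde)
      have h2 : (D.orderIsoOfFin rfl).symm ⟨d, hd.1⟩ = (D.orderIsoOfFin rfl).symm ⟨e, he.1⟩ :=
        Fin.ext (Fin.mk.inj_iff.mp h1)
      have h3 := (D.orderIsoOfFin rfl).symm.injective h2
      simpa using h3
  · rintro ⟨hc, h⟩
    refine ⟨hc, fun k hC hD => ?_⟩
    by_contra hlt
    push Not at hlt
    set d : Fin n := (D.orderIsoOfFin rfl ⟨k, hD⟩ : Fin n) with hd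
    have h1 := h (d.val + 1)
    have h2 : k + 1 ≤ (D.filter (fun x => x.val < d.val + 1)).card := by
      have : (Finset.univ : Finset (Fin (k+1))).card ≤
          (D.filter (fun x => x.val < d.val + 1)).card := by
        refine Finset.card_le_card_of_injOn
          (fun a => (D.orderIsoOfFin rfl ⟨a.val, by omega⟩ : Fin n)) ?_ ?_
        · intro a _
          simp only [Finset.coe_filter, Set.mem_ofPred_eq]
          refine ⟨Subtype.prop _, ?_⟩
          have : (D.orderIsoOfFin rfl ⟨a.val, by omega⟩ : Fin n) ≤ d := by
            rw [hd]
            simp only [Subtype.coe_le_coe, OrderIso.le_iff_le, Fin.mk_le_mk]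
            omega
          exact Nat.lt_succ_of_le this
        · intro a _ b _ hab
          have := (D.orderIsoOfFin rfl).injective (Subtype.ext hab)
          exact Fin.ext (Fin.mk.inj_iff.mp this)
      simpa using this
    have h3 : (C.filter (fun x => x.val < d.val + 1)).card ≤ k := by
      have : (C.filter (fun x => x.val < d.val + 1)).card ≤ (Finset.range k).card := by
        refine Finset.card_le_card_of_injOn
          (fun c => if hc : c ∈ C then ((C.orderIsoOfFin rfl).symm ⟨c, hc⟩).val else 0) ?_ ?_
        · intro c hc
          simp only [Finset.coe_filter, Set.mem_ofPred_eq] at hc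
          simp only [hc.1, dif_pos, Finset.coe_range, Set.mem_Iio]
          by_contra hk
          push Not at hk
          have : (C.orderIsoOfFin rfl ⟨k, hC⟩) ≤ ⟨c, hc.1⟩ := by
            rw [← OrderIso.le_symm_apply]
            exact hk
          have h5 : (C.orderIsoOfFin rfl ⟨k, hC⟩ : Fin n) ≤ c := this
          have h6 := hc.2
          have h7 := lt_of_lt_of_le hlt h5
          rw [Fin.lt_def] at h7
          omega
        · intro a ha b hb hab
          simp only [Finset.coe_filter, Set.mem_ofPred_eq] at ha hb
          simp only [ha.1, hb.1, dif_pos] at hab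
          have := (C.orderIsoOfFin rfl).symm.injective (Fin.ext hab)
          simpa using this
      simpa using this
    omega

theorem cnt_succ {n : ℕ} (C : Finset (Fin n)) (i : Fin n) :
    cnt C (i.val + 1) = cnt C i.val + if i ∈ C then 1 else 0 := by
  unfold cnt
  have : C.filter (fun x => x.val < i.val + 1) =
      if i ∈ C then insert i (C.filter (fun x => x.val < i.val)) else
        C.filter (fun x => x.val < i.val) := by
    ext x
    split_ifs with h
    · simp only [Finset.mem_filter, Finset.mem_insert, Fin.ext_iff]
      constructor
      · rintro ⟨h1, h2⟩
        by_cases hx : x.val = i.val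
        · exact Or.inl hx
        · exact Or.inr ⟨h1, by omega⟩
      · rintro (h1 | h1)
        · exact ⟨(Fin.ext h1 : x = i) ▸ h, by omega⟩
        · exact ⟨h1.1, by omega⟩
    · simp only [Finset.mem_filter]
      refine and_congr_right fun hx => ?_
      have : x.val ≠ i.val := fun h' => h ((Fin.ext h' : x = i) ▸ hx)
      omega
  rw [this]
  split_ifs with h
  · rw [Finset.card_insert_of_notMem (by simp)]
  · rfl

/-- swap two rows of a column -/
def swp {n : ℕ} (i j : Fin n) (C : Finset (Fin n)) : Finset (Fin n) :=
  C.map (Equiv.swap i j).toEmbedding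

theorem mem_swp {n : ℕ} (i j : Fin n) (C : Finset (Fin n)) (x : Fin n) :
    x ∈ swp i j C ↔ Equiv.swap i j x ∈ C := by
  unfold swp
  rw [Finset.mem_map_equiv, Equiv.symm_swap]

theorem swp_swp {n : ℕ} (i j : Fin n) (C : Finset (Fin n)) : swp i j (swp i j C) = C := by
  ext x; simp [mem_swp]

theorem card_swp {n : ℕ} (i j : Fin n) (C : Finset (Fin n)) : (swp i j C).card = C.card := by
  simp [swp]

theorem cnt_swp {n : ℕ} (i j : Fin n) (hij : i.val + 1 = j.val) (C : Finset (Fin n)) (t : ℕ)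
    (ht : t ≠ j.val) : cnt (swp i j C) t = cnt C t := by
  unfold cnt
  have : (swp i j C).filter (fun x => x.val < t) = swp i j (C.filter (fun x => x.val < t)) := by
    ext x
    simp only [Finset.mem_filter, mem_swp]
    refine and_congr_right fun _ => ?_
    by_cases h1 : x = i
    · subst h1; rw [Equiv.swap_apply_left]; omega
    · by_cases h2 : x = j
      · subst h2; rw [Equiv.swap_apply_right]; omega
      · rw [Equiv.swap_apply_of_ne_of_ne h1 h2]
  rw [this, card_swp]

theorem gale_swp {n : ℕ} {i j : Fin n} (hij : i.val + 1 = j.val) {C E : Finset (Fin n)}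
    (hE : i ∈ E → j ∈ E) (h : GaleLE C E) : GaleLE (swp i j C) E := by
  rw [galeLE_iff] at h ⊢
  refine ⟨by rw [card_swp]; exact h.1, fun t => ?_⟩
  by_cases ht : t = j.val
  · have e1 := cnt_succ (swp i j C) i
    rw [cnt_swp i j hij C i.val (by omega)] at e1
    have e2 := cnt_succ C i
    have e3 := cnt_succ C j
    have e4 := cnt_succ E i
    have e5 := cnt_succ E j
    have h0 := h.2 i.val
    have h1 := h.2 (i.val + 1)
    have h2 := h.2 (j.val + 1)
    simp only [mem_swp, Equiv.swap_apply_left] at e1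
    rw [← hij] at e3 e5 h2
    rw [ht, ← hij]
    split_ifs at e1 e2 e3 e4 e5 with a1 a2 a3 a4 a5 <;> first | omega | (exfalso; tauto)
  · rw [cnt_swp i j hij C t ht]; exact h.2 t

theorem gale_refl {n : ℕ} (E : Finset (Fin n)) : GaleLE E E := by
  rw [galeLE_iff]; exact ⟨rfl, fun _ => le_rfl⟩

open scoped Classical in
/-- the key polynomial of one column -/
noncomputable def kap {n : ℕ} (E : Finset (Fin n)) : MvPolynomial (Fin n) ℤ :=
  ∑ C ∈ Finset.univ.filter (fun C => GaleLE C E), ∏ i ∈ C, X i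

theorem maxPoly_eq {n : ℕ} (D : Fin n → Finset (Fin n)) : MaxPoly D = ∏ j, kap (D j) := by
  classical
  unfold MaxPoly kap xDiagram
  rw [Finset.prod_univ_sum]
  refine Finset.sum_congr ?_ (fun _ _ => rfl)
  ext C
  simp only [Finset.mem_filter, Finset.mem_univ, true_and, Fintype.mem_piFinset]
  rfl

theorem rename_mon {n : ℕ} (i j : Fin n) (C : Finset (Fin n)) :
    rename (Equiv.swap i j) (∏ i ∈ C, (X i : MvPolynomial (Fin n) ℤ)) = ∏ i ∈ swp i j C, X i := by
  unfold swp
  simp [Finset.prod_map]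

theorem kap_symm {n : ℕ} {i j : Fin n} (hij : i.val + 1 = j.val) {E : Finset (Fin n)}
    (hE : i ∈ E → j ∈ E) : rename (Equiv.swap i j) (kap E) = kap E := by
  classical
  unfold kap
  rw [map_sum]
  refine Finset.sum_bij (fun C _ => swp i j C) ?_ ?_ ?_ ?_
  · intro C hC
    simp only [Finset.mem_filter, Finset.mem_univ, true_and] at hC ⊢
    exact gale_swp hij hE hC
  · intro C _ C' _ h
    rw [← swp_swp i j C, h, swp_swp]
  · intro C hC
    simp only [Finset.mem_filter, Finset.mem_univ, true_and] at hC
    exact ⟨swp i j C, by simpa using gale_swp hij hE hC, swp_swp i j C⟩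
  · intro C _
    exact rename_mon i j C

theorem gale_swp_of_bad {n : ℕ} {i j : Fin n} (hij : i.val + 1 = j.val) {E : Finset (Fin n)}
    (hi : i ∈ E) (hj : j ∉ E) (C : Finset (Fin n)) :
    (GaleLE C E → GaleLE C (swp i j E)) ∧
    (GaleLE C (swp i j E) → ¬ GaleLE C E → i ∉ C ∧ j ∈ C) := by
  have d1 := cnt_succ (swp i j E) i
  rw [cnt_swp i j hij E i.val (by omega)] at d1
  simp only [mem_swp, Equiv.swap_apply_left, hj, if_false] at d1
  have d2 := cnt_succ E i
  simp only [hi, if_true] at d2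
  have d3 := cnt_succ E j
  simp only [hj, if_false] at d3
  have e1 := cnt_succ C i
  have e2 := cnt_succ C j
  rw [← hij] at e2 d3
  constructor
  · intro h
    rw [galeLE_iff] at h ⊢
    refine ⟨by rw [card_swp]; exact h.1, fun t => ?_⟩
    by_cases ht : t = j.val
    · have := h.2 t
      rw [ht, ← hij] at this ⊢
      omega
    · rw [cnt_swp i j hij E t ht]; exact h.2 t
  · intro h hn
    rw [galeLE_iff] at h hn
    rw [card_swp] at h
    have h1 : ¬ cnt E (i.val + 1) ≤ cnt C (i.val + 1) := by
      intro h2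
      apply hn
      refine ⟨h.1, fun t => ?_⟩
      by_cases ht : t = j.val
      · rw [ht, ← hij]; exact h2
      · rw [← cnt_swp i j hij E t ht]; exact h.2 t
    have h2 := h.2 (i.val)
    have h3 := h.2 (i.val + 1)
    have h4 := h.2 (j.val + 1)
    rw [cnt_swp i j hij E i.val (by omega)] at h2
    rw [cnt_swp i j hij E (j.val + 1) (by omega)] at h4
    rw [← hij] at h4
    constructor
    · intro hc; simp only [hc, if_true] at e1; omega
    · by_contra hc
      simp only [hc, if_false] at e2
      split_ifs at e1 <;> omega

theorem kap_demazure {n : ℕ} {i j : Fin n} (hij : i.val + 1 = j.val) {E : Finset (Fin n)}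
    (hi : i ∈ E) (hj : j ∉ E) :
    (X i - X j) * kap (swp i j E) = X i * kap E - X j * rename (Equiv.swap i j) (kap E) := by
  classical
  have hne : i ≠ j := by intro h; rw [h] at hij; omega
  set B : MvPolynomial (Fin n) ℤ := ∑ C ∈ Finset.univ.filter
    (fun C => GaleLE C (swp i j E) ∧ ¬ GaleLE C E), ∏ i ∈ C, X i with hB
  have h1 : kap (swp i j E) = kap E + B := by
    unfold kap
    rw [hB, ← Finset.sum_filter_add_sum_filter_not
      (Finset.univ.filter (fun C => GaleLE C (swp i j E))) (fun C => GaleLE C E)]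
    congr 1
    · refine Finset.sum_congr ?_ (fun _ _ => rfl)
      ext C
      simp only [Finset.mem_filter, Finset.mem_univ, true_and]
      exact ⟨fun h => h.2, fun h => ⟨(gale_swp_of_bad hij hi hj C).1 h, h⟩⟩
    · rw [Finset.filter_filter]
  have h2 : X i * B = X j * rename (Equiv.swap i j) B := by
    rw [hB, map_sum, Finset.mul_sum, Finset.mul_sum]
    refine Finset.sum_congr rfl fun C hC => ?_
    simp only [Finset.mem_filter, Finset.mem_univ, true_and] at hC
    obtain ⟨hiC, hjC⟩ := (gale_swp_of_bad hij hi hj C).2 hC.1 hC.2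
    rw [← Finset.mul_prod_erase C _ hjC, map_mul, rename_X, Equiv.swap_apply_right, map_prod]
    have : ∏ x ∈ C.erase j, rename (Equiv.swap i j) (X x : MvPolynomial (Fin n) ℤ) =
        ∏ x ∈ C.erase j, X x := by
      refine Finset.prod_congr rfl fun x hx => ?_
      rw [rename_X, Equiv.swap_apply_of_ne_of_ne]
      · rintro rfl; exact hiC (Finset.mem_of_mem_erase hx)
      · exact Finset.ne_of_mem_erase hx
    rw [this]; ring
  have h3 : rename (Equiv.swap i j) (kap (swp i j E)) = kap (swp i j E) := by
    refine kap_symm hij fun h => ?_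
    rw [mem_swp, Equiv.swap_apply_left] at h
    exact absurd h hj
  rw [h1, map_add] at h3
  have h4 : rename (Equiv.swap i j) (kap E) = kap E + B - rename (Equiv.swap i j) B := by
    rw [← h3]; ring
  rw [h1, h4]
  linear_combination h2

/-- the initial segment -/
def seg (n k : ℕ) : Finset (Fin n) := Finset.univ.filter (fun x => x.val < k)

theorem kap_seg (n k : ℕ) : kap (seg n k) = ∏ i ∈ seg n k, X i := by
  classical
  unfold kap
  have : Finset.univ.filter (fun C => GaleLE C (seg n k)) = {seg n k} := by
    ext C
    simp only [Finset.mem_filter, Finset.mem_univ, true_and, Finset.mem_singleton]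
    constructor
    · intro h
      rw [galeLE_iff] at h
      have h1 := h.2 k
      have h2 : (seg n k).filter (fun x => x.val < k) = seg n k := by
        ext x; simp [seg]
      have h3 : C.filter (fun x => x.val < k) ⊆ seg n k := by
        intro x; simp [seg]
      unfold cnt at h1
      rw [h2] at h1
      have h4 := Finset.eq_of_subset_of_card_le h3 h1
      have h5 : C.filter (fun x => x.val < k) = C :=
        Finset.eq_of_subset_of_card_le (Finset.filter_subset _ _) (by rw [h.1]; exact h1)
      rw [← h5, h4]
    · rintro rfl; exact gale_refl _
  rw [this, Finset.sum_singleton]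

/-! ## Induction on permutations and divisibility -/

/-- measure for the induction -/
def mu {n : ℕ} (w : Equiv.Perm (Fin n)) : ℤ := ∑ x : Fin n, (x.val : ℤ) * ((w x).val : ℤ)

theorem mu_swap {n : ℕ} (w : Equiv.Perm (Fin n)) (i j : Fin n) (hij : i.val + 1 = j.val)
    (h : w i < w j) : mu (w * Equiv.swap i j) < mu w := by
  have hne : i ≠ j := by intro h; rw [h] at hij; omega
  unfold mu
  have hj : j ∈ Finset.univ.erase i := by simp [hne.symm]
  rw [← Finset.add_sum_erase Finset.univ _ (Finset.mem_univ i), ← Finset.add_sum_erase _ _ hj,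
    ← Finset.add_sum_erase Finset.univ (fun x : Fin n => (x.val : ℤ) * ((w x).val : ℤ))
      (Finset.mem_univ i), ← Finset.add_sum_erase _ _ hj]
  have : ∑ x ∈ (Finset.univ.erase i).erase j,
      (x.val : ℤ) * (((w * Equiv.swap i j) x).val : ℤ) =
      ∑ x ∈ (Finset.univ.erase i).erase j, (x.val : ℤ) * ((w x).val : ℤ) := by
    refine Finset.sum_congr rfl fun x hx => ?_
    simp only [Finset.mem_erase, Finset.mem_univ, and_true] at hx
    rw [Equiv.Perm.mul_apply, Equiv.swap_apply_of_ne_of_ne hx.2 hx.1]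
  rw [this]
  simp only [Equiv.Perm.mul_apply, Equiv.swap_apply_left, Equiv.swap_apply_right]
  rw [Fin.lt_def] at h
  have h1 : (j.val : ℤ) = i.val + 1 := by omega
  have h2 : ((w i).val : ℤ) < (w j).val := by exact_mod_cast h
  rw [h1]
  nlinarith

theorem mu_nonneg {n : ℕ} (w : Equiv.Perm (Fin n)) : 0 ≤ mu w := by
  unfold mu; positivity

theorem desc_of_no_asc {n : ℕ} (w : Equiv.Perm (Fin n)) (T : ℕ)
    (h : ∀ i j : Fin n, i.val + 1 = j.val → j.val ≤ T → w j ≤ w i) :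
    ∀ r s : Fin n, r < s → s.val ≤ T → w s < w r := by
  have key : ∀ (k : ℕ) (r s : Fin n), r.val + k + 1 = s.val → s.val ≤ T → w s < w r := by
    intro k
    induction k with
    | zero =>
      intro r s h1 h2
      refine lt_of_le_of_ne (h r s (by omega) h2) fun h3 => ?_
      have := w.injective h3
      rw [this] at h1; omega
    | succ k ih =>
      intro r s h1 h2
      have h3 := ih r ⟨r.val + k + 1, by omega⟩ rfl (by simp only; omega)
      exact lt_of_le_of_lt (h ⟨r.val + k + 1, by omega⟩ s (by simp only; omega) h2) h3
  intro r s hrs hs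
  exact key (s.val - r.val - 1) r s (by rw [Fin.lt_def] at hrs; omega) hs

theorem eq_rev_or_first_ascent {n : ℕ} (w : Equiv.Perm (Fin n)) :
    w = Fin.revPerm ∨ ∃ i j : Fin n, i.val + 1 = j.val ∧ w i < w j ∧ ∀ r, r < i → w i < w r := by
  classical
  by_cases h : ∃ t : ℕ, ∃ i j : Fin n, i.val = t ∧ i.val + 1 = j.val ∧ w i < w j
  · right
    obtain ⟨i, j, hi, hij, hlt⟩ := Nat.find_spec h
    refine ⟨i, j, hij, hlt, fun r hr => ?_⟩
    refine desc_of_no_asc w i.val (fun a b hab hb => ?_) r i hr le_rfl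
    by_contra hc
    push Not at hc
    exact Nat.find_min h (m := a.val) (by omega) ⟨a, b, rfl, hab, hc⟩
  · left
    have h1 := desc_of_no_asc w n (fun i j hij _ => by
      by_contra hc
      push Not at hc
      exact h ⟨i.val, i, j, rfl, hij, hc⟩)
    have h2 : StrictMono (fun x => w (Fin.rev x)) := by
      intro a b hab
      exact h1 _ _ (Fin.rev_lt_rev.mpr hab) (by omega)
    have h3 : (fun x => w (Fin.rev x)) = id := by
      refine (h2.range_inj strictMono_id).mp ?_
      rw [Set.range_id]
      exact Set.range_eq_univ.mpr (w.surjective.comp Fin.rev_surjective)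
    ext x
    have := congrFun h3 (Fin.rev x)
    simp only [Fin.rev_rev, id] at this
    rw [this]; rfl

theorem perm_ind {n : ℕ} (P : Equiv.Perm (Fin n) → Prop) (h0 : P Fin.revPerm)
    (h1 : ∀ (w : Equiv.Perm (Fin n)) (i j : Fin n), i.val + 1 = j.val → w i < w j →
      (∀ r, r < i → w i < w r) → P (w * Equiv.swap i j) → P w) (w : Equiv.Perm (Fin n)) : P w := by
  have key : ∀ (N : ℕ) (w : Equiv.Perm (Fin n)), mu w < N → P w := by
    intro N
    induction N with
    | zero => intro w hw; have := mu_nonneg w; simp at hw; omega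
    | succ N ih =>
      intro w hw
      rcases eq_rev_or_first_ascent w with rfl | ⟨i, j, hij, hlt, hr⟩
      · exact h0
      · refine h1 w i j hij hlt hr (ih _ ?_)
        have := mu_swap w i j hij hlt
        push_cast at hw
        omega
  exact key ((mu w).toNat + 1) w (by have := mu_nonneg w; push_cast; omega)

theorem X_sub_ne {n : ℕ} {i j : Fin n} (hij : i.val + 1 = j.val) :
    (X i - X j : MvPolynomial (Fin n) ℤ) ≠ 0 := by
  intro h
  have := X_injective (R := ℤ) (sub_eq_zero.mp h)
  rw [this] at hij; omega

theorem dd_dvd {n : ℕ} (i j : Fin n) (T : MvPolynomial (Fin n) ℤ) :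
    (X i - X j) ∣ T - rename (Equiv.swap i j) T := by
  rw [← Ideal.mem_span_singleton, ← Ideal.Quotient.eq]
  set I := Ideal.span {(X i - X j : MvPolynomial (Fin n) ℤ)}
  have hX : Ideal.Quotient.mk I (X i) = Ideal.Quotient.mk I (X j) := by
    rw [Ideal.Quotient.eq]; exact Ideal.mem_span_singleton_self _
  have : (Ideal.Quotient.mkₐ ℤ I) =
      (Ideal.Quotient.mkₐ ℤ I).comp (rename (Equiv.swap i j)) := by
    apply MvPolynomial.algHom_ext
    intro k
    simp only [AlgHom.comp_apply, rename_X, Ideal.Quotient.mkₐ_eq_mk]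
    by_cases h1 : k = i
    · subst h1; rw [Equiv.swap_apply_left, hX]
    · by_cases h2 : k = j
      · subst h2; rw [Equiv.swap_apply_right, hX]
      · rw [Equiv.swap_apply_of_ne_of_ne h1 h2]
  exact DFunLike.congr_fun this T

theorem dvd_of_sym {n : ℕ} {i j : Fin n} (hij : i.val + 1 = j.val)
    {P A B : MvPolynomial (Fin n) ℤ} (hP : rename (Equiv.swap i j) P = P) (hB : P ∣ B)
    (h : (X i - X j) * A = B - rename (Equiv.swap i j) B) : P ∣ A := by
  obtain ⟨T, rfl⟩ := hB
  obtain ⟨U, hU⟩ := dd_dvd i j T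
  refine ⟨U, mul_left_cancel₀ (X_sub_ne hij) ?_⟩
  rw [h, map_mul, hP]
  linear_combination P * hU

theorem swp_seg {n : ℕ} {i j : Fin n} (hij : i.val + 1 = j.val) (r : ℕ) (hr : r ≠ j.val) :
    swp i j (seg n r) = seg n r := by
  ext x
  simp only [mem_swp, seg, Finset.mem_filter, Finset.mem_univ, true_and]
  by_cases h1 : x = i
  · subst h1; rw [Equiv.swap_apply_left]; omega
  · by_cases h2 : x = j
    · subst h2; rw [Equiv.swap_apply_right]; omega
    · rw [Equiv.swap_apply_of_ne_of_ne h1 h2]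

theorem schub_dvd {n : ℕ} {S : Equiv.Perm (Fin n) → MvPolynomial (Fin n) ℤ}
    (hS : IsSchubertFamily S) (p : ℕ) (w : Equiv.Perm (Fin n)) :
    ∀ r : ℕ, (∀ t : Fin n, t.val < r → p ≤ (w t).val) → (∏ t ∈ seg n r, X t) ^ p ∣ S w := by
  refine perm_ind (fun w => ∀ r : ℕ, (∀ t : Fin n, t.val < r → p ≤ (w t).val) →
    (∏ t ∈ seg n r, (X t : MvPolynomial (Fin n) ℤ)) ^ p ∣ S w) ?_ ?_ w
  · intro r hr
    rw [hS.1, ← Finset.prod_pow]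
    refine dvd_trans (Finset.prod_dvd_prod_of_dvd _ _ fun t ht => ?_)
      (Finset.prod_dvd_prod_of_subset _ _ _ (Finset.subset_univ (seg n r)))
    apply pow_dvd_pow
    have := hr t (by simpa [seg] using ht)
    rw [Fin.revPerm_apply, Fin.val_rev] at this
    omega
  · intro w i j hij hlt _ ih r hr
    have hsym : ∀ r, r ≠ j.val → rename (Equiv.swap i j)
        ((∏ t ∈ seg n r, (X t : MvPolynomial (Fin n) ℤ)) ^ p) = (∏ t ∈ seg n r, X t) ^ p := by
      intro r hr
      rw [map_pow, rename_mon, swp_seg hij r hr]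
    have hgen : ∀ r, r ≠ j.val → (∀ t : Fin n, t.val < r → p ≤ (w t).val) →
        (∏ t ∈ seg n r, (X t : MvPolynomial (Fin n) ℤ)) ^ p ∣ S w := by
      intro r hrj hr
      refine dvd_of_sym hij (hsym r hrj) (ih r ?_) (hS.2 w i j hij hlt)
      intro t ht
      rw [Equiv.Perm.mul_apply]
      apply hr
      by_cases h1 : t = i
      · subst h1; rw [Equiv.swap_apply_left]; omega
      · by_cases h2 : t = j
        · subst h2; rw [Equiv.swap_apply_right]; omega
        · rw [Equiv.swap_apply_of_ne_of_ne h1 h2]; exact ht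
    by_cases hrj : r = j.val
    · refine dvd_trans ?_ (hgen (r + 1) (by omega) ?_)
      · apply pow_dvd_pow_of_dvd
        apply Finset.prod_dvd_prod_of_subset
        intro x
        simp only [seg, Finset.mem_filter, Finset.mem_univ, true_and]
        omega
      · intro t ht
        by_cases h1 : t.val < r
        · exact hr t h1
        · have : t = j := Fin.ext (by omega)
          rw [this]
          have h3 := hr i (by omega)
          rw [Fin.lt_def] at hlt
          omega
    · exact hgen r hrj hr

/-! ## Sufficiency -/

/-- combined avoidance of 1432 and 1423 -/
def Av {n : ℕ} (w : Equiv.Perm (Fin n)) : Prop :=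
  ∀ a b c d : Fin n, a < b → b < c → b < d → c ≠ d → w a < w c → w a < w d → w c < w b →
    w d < w b → False

theorem swap_lt {n : ℕ} {i j : Fin n} (hij : i.val + 1 = j.val) {x y : Fin n} (h : x < y)
    (hne : ¬ (x = i ∧ y = j)) : Equiv.swap i j x < Equiv.swap i j y := by
  rw [Equiv.swap_apply_def, Equiv.swap_apply_def]
  simp only [Fin.lt_def, Fin.ext_iff] at *
  split_ifs <;> omega

theorem Av_swap {n : ℕ} {w : Equiv.Perm (Fin n)} {i j : Fin n} (hij : i.val + 1 = j.val)
    (hlt : w i < w j) (hr : ∀ r, r < i → w i < w r) (h : Av w) : Av (w * Equiv.swap i j) := by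
  intro a b c d hab hbc hbd hcd h1 h2 h3 h4
  simp only [Equiv.Perm.mul_apply] at h1 h2 h3 h4
  have aux : ∀ c, b < c → w (Equiv.swap i j a) < w (Equiv.swap i j c) → ¬ (b = i ∧ c = j) := by
    rintro c hc hac ⟨rfl, rfl⟩
    rw [Equiv.swap_apply_right, Equiv.swap_apply_of_ne_of_ne hab.ne (hab.trans hc).ne] at hac
    exact absurd (hr a hab) (not_lt.mpr hac.le)
  refine h _ _ _ _ (swap_lt hij hab ?_) (swap_lt hij hbc (aux c hbc h1))
    (swap_lt hij hbd (aux d hbd h2)) ((Equiv.swap i j).injective.ne hcd) h1 h2 h3 h4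
  rintro ⟨rfl, rfl⟩
  rw [Equiv.swap_apply_right] at h3
  rw [Equiv.swap_apply_left] at h1
  exact absurd (h1.trans h3) (not_lt.mpr hlt.le)

theorem mem_rothe {n : ℕ} (w : Equiv.Perm (Fin n)) (c x : Fin n) :
    x ∈ rothe w c ↔ c < w x ∧ x < w.symm c := by simp [rothe]

theorem rothe_swap_of_ne {n : ℕ} {w : Equiv.Perm (Fin n)} {i j : Fin n} (hij : i.val + 1 = j.val)
    (hlt : w i < w j) (c : Fin n) (hc : c ≠ w i) :
    rothe (w * Equiv.swap i j) c = swp i j (rothe w c) := by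
  ext x
  rw [mem_swp, mem_rothe, mem_rothe]
  have e1 : (w * Equiv.swap i j).symm c = Equiv.swap i j (w.symm c) := by
    rw [Equiv.symm_apply_eq]; simp
  rw [e1, Equiv.Perm.mul_apply]
  refine and_congr_right fun hx => ?_
  obtain ⟨y, rfl⟩ := w.surjective c
  rw [Equiv.symm_apply_apply]
  have hy : y ≠ i := fun h => hc (h ▸ rfl)
  constructor
  · intro h
    have := swap_lt hij h ?_
    · rwa [Equiv.swap_apply_self] at this
    · rintro ⟨_, h'⟩
      apply hy
      rw [← Equiv.swap_apply_self i j y, h', Equiv.swap_apply_right]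
  · intro h
    have := swap_lt hij h ?_
    · rwa [Equiv.swap_apply_self] at this
    · rintro ⟨h', rfl⟩
      rw [h'] at hx
      exact absurd hx (not_lt.mpr hlt.le)

theorem kap_prod_step {n : ℕ} {w : Equiv.Perm (Fin n)} {i j : Fin n} (hij : i.val + 1 = j.val)
    (hlt : w i < w j) (hw : Av w) :
    (X i - X j) * ∏ c ∈ Finset.univ.erase (w i), kap (rothe w c) =
      X i * ∏ c ∈ Finset.univ.erase (w i), kap (rothe (w * Equiv.swap i j) c) -
      X j * rename (Equiv.swap i j)
        (∏ c ∈ Finset.univ.erase (w i), kap (rothe (w * Equiv.swap i j) c)) := by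
  classical
  have hlij : i < j := by rw [Fin.lt_def]; omega
  have hmem : ∀ c, i ∈ rothe w c → j ∈ rothe w c := by
    intro c hc
    rw [mem_rothe] at hc ⊢
    refine ⟨hc.1.trans hlt, ?_⟩
    have : w.symm c ≠ j := by
      intro h
      rw [Equiv.symm_apply_eq] at h
      rw [h] at hc
      exact absurd hc.1 (not_lt.mpr hlt.le)
    rw [Fin.lt_def] at *
    have h2 : (w.symm c).val ≠ j.val := fun h => this (Fin.ext h)
    omega
  have hgood : ∀ c, c ≠ w i → (j ∈ rothe w c → i ∈ rothe w c) →
      rothe (w * Equiv.swap i j) c = rothe w c := by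
    intro c hc h
    rw [rothe_swap_of_ne hij hlt c hc]
    ext x
    rw [mem_swp, Equiv.swap_apply_def]
    split_ifs with h1 h2
    · subst h1; exact ⟨h, hmem c⟩
    · subst h2; exact ⟨hmem c, h⟩
    · rfl
  by_cases hbad : ∃ c, c ≠ w i ∧ j ∈ rothe w c ∧ i ∉ rothe w c
  · obtain ⟨c₀, hc0, hj, hi⟩ := hbad
    have huniq : ∀ c, c ≠ w i → j ∈ rothe w c → i ∉ rothe w c → c = c₀ := by
      have aux : ∀ c, c ≠ w i → j ∈ rothe w c → i ∉ rothe w c →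
          j < w.symm c ∧ w i < c ∧ c < w j := by
        intro c hc hj hi
        rw [mem_rothe] at hj hi
        refine ⟨hj.2, ?_, hj.1⟩
        by_contra h
        exact hi ⟨lt_of_le_of_ne (not_lt.mp h) hc, hlij.trans hj.2⟩
      intro c hc h1 h2
      by_contra hne
      have a1 := aux c hc h1 h2
      have a2 := aux c₀ hc0 hj hi
      refine hw i j (w.symm c) (w.symm c₀) hlij a1.1 a2.1 (fun h => hne (w.symm.injective h))
        ?_ ?_ ?_ ?_ <;> simp [a1.2.1, a1.2.2, a2.2.1, a2.2.2]
    have hm : c₀ ∈ Finset.univ.erase (w i) := by simp [hc0]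
    rw [← Finset.mul_prod_erase _ _ hm, ← Finset.mul_prod_erase _ _ hm]
    have hR : ∏ c ∈ (Finset.univ.erase (w i)).erase c₀, kap (rothe (w * Equiv.swap i j) c) =
        ∏ c ∈ (Finset.univ.erase (w i)).erase c₀, kap (rothe w c) := by
      refine Finset.prod_congr rfl fun c hc => ?_
      simp only [Finset.mem_erase, Finset.mem_univ, and_true] at hc
      rw [hgood c hc.2]
      intro h
      by_contra h'
      exact hc.1 (huniq c hc.2 h h')
    have hsR : rename (Equiv.swap i j) (∏ c ∈ (Finset.univ.erase (w i)).erase c₀, kap (rothe w c)) =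
        ∏ c ∈ (Finset.univ.erase (w i)).erase c₀, kap (rothe w c) := by
      rw [map_prod]
      exact Finset.prod_congr rfl fun c _ => kap_symm hij (hmem c)
    have hE := rothe_swap_of_ne hij hlt c₀ hc0
    have hd := kap_demazure hij (E := rothe (w * Equiv.swap i j) c₀)
      (by rw [hE, mem_swp, Equiv.swap_apply_left]; exact hj)
      (by rw [hE, mem_swp, Equiv.swap_apply_right]; exact hi)
    have hE2 : swp i j (rothe (w * Equiv.swap i j) c₀) = rothe w c₀ := by rw [hE, swp_swp]
    rw [hE2] at hd
    rw [hR, map_mul, hsR]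
    linear_combination (∏ c ∈ (Finset.univ.erase (w i)).erase c₀, kap (rothe w c)) * hd
  · push Not at hbad
    have hR : ∏ c ∈ (Finset.univ.erase (w i)), kap (rothe (w * Equiv.swap i j) c) =
        ∏ c ∈ (Finset.univ.erase (w i)), kap (rothe w c) := by
      refine Finset.prod_congr rfl fun c hc => ?_
      simp only [Finset.mem_erase, Finset.mem_univ, and_true] at hc
      rw [hgood c hc (hbad c hc)]
    have hsR : rename (Equiv.swap i j) (∏ c ∈ (Finset.univ.erase (w i)), kap (rothe w c)) =
        ∏ c ∈ (Finset.univ.erase (w i)), kap (rothe w c) := by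
      rw [map_prod]
      exact Finset.prod_congr rfl fun c _ => kap_symm hij (hmem c)
    rw [hR, hsR]; ring

theorem schub_eq_of_av {n : ℕ} {S : Equiv.Perm (Fin n) → MvPolynomial (Fin n) ℤ}
    (hS : IsSchubertFamily S) (w : Equiv.Perm (Fin n)) :
    Av w → S w = ∏ c, kap (rothe w c) := by
  refine perm_ind (fun w => Av w → S w = ∏ c, kap (rothe w c)) ?_ ?_ w
  · intro _
    rw [hS.1]
    have h1 : ∀ c : Fin n, kap (rothe Fin.revPerm c) = ∏ x ∈ seg n (n - 1 - c.val),
        (X x : MvPolynomial (Fin n) ℤ) := by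
      intro c
      rw [← kap_seg]
      congr 1
      ext x
      rw [mem_rothe]
      simp only [seg, Finset.mem_filter, Finset.mem_univ, true_and, Fin.revPerm_apply,
        Fin.revPerm_symm, Fin.lt_def, Fin.val_rev]
      omega
    simp only [h1, seg, Finset.prod_filter]
    rw [Finset.prod_comm]
    refine Finset.prod_congr rfl fun x _ => ?_
    rw [← Finset.prod_filter, Finset.prod_const]
    congr 1
    have : (Finset.univ.filter fun c : Fin n => x.val < n - 1 - c.val) =
        Finset.univ.filter fun c : Fin n => c.val < n - 1 - x.val := by
      ext c; simp only [Finset.mem_filter, Finset.mem_univ, true_and]; omega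
    rw [this, Fin.card_filter_val_lt]
    omega
  · intro w i j hij hlt hr ih hw
    have hv := ih (Av_swap hij hlt hr hw)
    have hlij : i < j := by rw [Fin.lt_def]; omega
    have e1 : rothe w (w i) = seg n i.val := by
      ext x
      rw [mem_rothe, Equiv.symm_apply_apply]
      simp only [seg, Finset.mem_filter, Finset.mem_univ, true_and, ← Fin.lt_def]
      exact ⟨fun h => h.2, fun h => ⟨hr x h, h⟩⟩
    have e2 : rothe (w * Equiv.swap i j) (w i) = seg n j.val := by
      ext x
      have : (w * Equiv.swap i j).symm (w i) = j := by
        rw [Equiv.symm_apply_eq]; simp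
      rw [mem_rothe, this]
      simp only [seg, Finset.mem_filter, Finset.mem_univ, true_and, ← Fin.lt_def]
      refine ⟨fun h => h.2, fun h => ⟨?_, h⟩⟩
      rw [Equiv.Perm.mul_apply]
      by_cases hx : x = i
      · subst hx; rw [Equiv.swap_apply_left]; exact hlt
      · rw [Equiv.swap_apply_of_ne_of_ne hx h.ne]
        refine hr x ?_
        have : x.val ≠ i.val := fun h => hx (Fin.ext h)
        rw [Fin.lt_def] at *; omega
    have e3 : (∏ x ∈ seg n j.val, (X x : MvPolynomial (Fin n) ℤ)) =
        X i * ∏ x ∈ seg n i.val, X x := by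
      have : seg n j.val = insert i (seg n i.val) := by
        ext x
        simp only [seg, Finset.mem_filter, Finset.mem_univ, true_and, Finset.mem_insert,
          Fin.ext_iff]
        omega
      rw [this, Finset.prod_insert (by simp [seg])]
    have e4 : rename (Equiv.swap i j) (∏ x ∈ seg n i.val, (X x : MvPolynomial (Fin n) ℤ)) =
        ∏ x ∈ seg n i.val, X x := by
      rw [rename_mon, swp_seg hij _ (by omega)]
    apply mul_left_cancel₀ (X_sub_ne hij)
    rw [hS.2 w i j hij hlt, hv, ← Finset.mul_prod_erase _ _ (Finset.mem_univ (w i)),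
      ← Finset.mul_prod_erase _ _ (Finset.mem_univ (w i)), e1, e2, kap_seg, kap_seg, e3,
      map_mul, map_mul, e4, rename_X, Equiv.swap_apply_left]
    linear_combination (-∏ x ∈ seg n i.val, (X x : MvPolynomial (Fin n) ℤ)) *
      kap_prod_step hij hlt hw

/-! ## Inserting the minimal value -/

/-- insert the minimal value at position `k` -/
def ins {n : ℕ} (k : Fin (n + 1)) (v : Equiv.Perm (Fin n)) : Equiv.Perm (Fin (n + 1)) :=
  ((finSuccEquiv' k).trans (Equiv.optionCongr v)).trans (finSuccEquiv' 0).symm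

theorem ins_self {n : ℕ} (k : Fin (n + 1)) (v : Equiv.Perm (Fin n)) : ins k v k = 0 := by
  simp [ins]

theorem ins_succAbove {n : ℕ} (k : Fin (n + 1)) (v : Equiv.Perm (Fin n)) (i : Fin n) :
    ins k v (k.succAbove i) = (v i).succ := by
  simp [ins]

theorem ins_symm_zero {n : ℕ} (k : Fin (n + 1)) (v : Equiv.Perm (Fin n)) :
    (ins k v).symm 0 = k := by
  rw [Equiv.symm_apply_eq, ins_self]

theorem ins_symm_succ {n : ℕ} (k : Fin (n + 1)) (v : Equiv.Perm (Fin n)) (c : Fin n) :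
    (ins k v).symm c.succ = k.succAbove (v.symm c) := by
  rw [Equiv.symm_apply_eq, ins_succAbove, Equiv.apply_symm_apply]

theorem perm_ext_ins {n : ℕ} (k : Fin (n + 1)) (u w : Equiv.Perm (Fin (n + 1))) (h0 : u k = w k)
    (h : ∀ i, u (k.succAbove i) = w (k.succAbove i)) : u = w := by
  apply Equiv.ext
  intro x
  rcases Fin.eq_self_or_eq_succAbove k x with rfl | ⟨i, rfl⟩
  · exact h0
  · exact h i

theorem exists_ins {n : ℕ} (w : Equiv.Perm (Fin (n + 1))) (m : Fin (n + 1)) (h : w m = 0) :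
    ∃ v, w = ins m v := by
  have hne : ∀ i, w (m.succAbove i) ≠ 0 := by
    intro i hi
    rw [← h] at hi
    exact Fin.succAbove_ne m i (w.injective hi)
  have hinj : Function.Injective (fun i => (w (m.succAbove i)).pred (hne i)) := by
    intro a b hab
    simp only [Fin.pred_inj] at hab
    exact Fin.succAbove_right_injective (w.injective hab)
  refine ⟨Equiv.ofBijective _ (Finite.injective_iff_bijective.mp hinj), ?_⟩
  refine perm_ext_ins m _ _ ?_ ?_
  · rw [h, ins_self]
  · intro i
    rw [ins_succAbove]
    simp

theorem ins_swap {n : ℕ} (k : Fin n) (v : Equiv.Perm (Fin n)) :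
    ins k.castSucc v * Equiv.swap k.castSucc k.succ = ins k.succ v := by
  refine perm_ext_ins k.succ _ _ ?_ ?_
  · rw [Equiv.Perm.mul_apply, Equiv.swap_apply_right, ins_self, ins_self]
  · intro i
    rw [ins_succAbove, Equiv.Perm.mul_apply]
    by_cases h : i = k
    · subst h
      rw [Fin.succAbove_succ_self, Equiv.swap_apply_left]
      rw [← Fin.succAbove_castSucc_self, ins_succAbove]
    · have h1 : k.succ.succAbove i = k.castSucc.succAbove i := by
        have hv : i.val ≠ k.val := fun h' => h (Fin.ext h')
        simp only [Fin.succAbove, Fin.ext_iff, Fin.lt_def, Fin.val_castSucc, Fin.val_succ]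
        split_ifs <;> simp <;> omega
      rw [Equiv.swap_apply_of_ne_of_ne, h1, ins_succAbove]
      · rw [h1]; exact Fin.succAbove_ne _ _
      · exact Fin.succAbove_ne _ _

theorem ins_lt {n : ℕ} (k : Fin n) (v : Equiv.Perm (Fin n)) :
    ins k.castSucc v k.castSucc < ins k.castSucc v k.succ := by
  rw [ins_self]
  have := ins_succAbove k.castSucc v k
  rw [Fin.succAbove_castSucc_self] at this
  rw [this]
  exact Fin.succ_pos _

/-- evaluation: `X k ↦ a`, other variables by `g` -/
noncomputable def ev {n : ℕ} {A : Type} [CommRing A] (k : Fin (n + 1)) (a : A) (g : Fin n → A) :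
    MvPolynomial (Fin (n + 1)) ℤ →ₐ[ℤ] A :=
  aeval (Fin.insertNth (α := fun _ => A) k a g)

theorem ev_self {n : ℕ} {A : Type} [CommRing A] (k : Fin (n + 1)) (a : A) (g : Fin n → A) :
    ev k a g (X k) = a := by simp [ev]

theorem ev_succAbove {n : ℕ} {A : Type} [CommRing A] (k : Fin (n + 1)) (a : A) (g : Fin n → A)
    (i : Fin n) : ev k a g (X (k.succAbove i)) = g i := by simp [ev]

theorem ev_swap {n : ℕ} {A : Type} [CommRing A] (k : Fin n) (a : A) (g : Fin n → A)
    (T : MvPolynomial (Fin (n + 1)) ℤ) :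
    ev k.castSucc a g (rename (Equiv.swap k.castSucc k.succ) T) = ev k.succ a g T := by
  have : (ev k.castSucc a g).comp (rename (Equiv.swap k.castSucc k.succ)) = ev k.succ a g := by
    apply MvPolynomial.algHom_ext
    intro x
    rw [AlgHom.comp_apply, rename_X]
    rcases Fin.eq_self_or_eq_succAbove k.succ x with rfl | ⟨i, rfl⟩
    · rw [Equiv.swap_apply_right, ev_self, ev_self]
    · rw [ev_succAbove]
      by_cases h : i = k
      · subst h
        rw [Fin.succAbove_succ_self, Equiv.swap_apply_left]
        rw [← Fin.succAbove_castSucc_self, ev_succAbove]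
      · have h1 : k.succ.succAbove i = k.castSucc.succAbove i := by
          have hv : i.val ≠ k.val := fun h' => h (Fin.ext h')
          simp only [Fin.succAbove, Fin.ext_iff, Fin.lt_def, Fin.val_castSucc, Fin.val_succ]
          split_ifs <;> simp <;> omega
        rw [Equiv.swap_apply_of_ne_of_ne, h1, ev_succAbove]
        · rw [h1]; exact Fin.succAbove_ne _ _
        · exact Fin.succAbove_ne _ _
  exact DFunLike.congr_fun this T

theorem schub_ev_step {n : ℕ} {S : Equiv.Perm (Fin (n + 1)) → MvPolynomial (Fin (n + 1)) ℤ}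
    (hS : IsSchubertFamily S) {A : Type} [CommRing A] (a : A) (g : Fin n → A) (k : Fin n)
    (v : Equiv.Perm (Fin n)) :
    (a - g k) * ev k.castSucc a g (S (ins k.castSucc v)) =
      ev k.castSucc a g (S (ins k.succ v)) - ev k.succ a g (S (ins k.succ v)) := by
  have h := hS.2 (ins k.castSucc v) k.castSucc k.succ (by simp) (ins_lt k v)
  rw [ins_swap] at h
  have h2 := congrArg (ev k.castSucc a g) h
  rw [map_sub, map_mul, ev_swap, map_sub, ev_self] at h2
  have h3 := ev_succAbove k.castSucc a g k
  rw [Fin.succAbove_castSucc_self] at h3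
  rw [h3] at h2
  exact h2

theorem mem_seg {n k : ℕ} (x : Fin n) : x ∈ seg n k ↔ x.val < k := by simp [seg]

theorem prod_seg_succ {n : ℕ} (k : Fin n) :
    (∏ x ∈ seg n (k.val + 1), (X x : MvPolynomial (Fin n) ℤ)) = X k * ∏ x ∈ seg n k.val, X x := by
  have : seg n (k.val + 1) = insert k (seg n k.val) := by
    ext x
    simp only [mem_seg, Finset.mem_insert, Fin.ext_iff]
    omega
  rw [this, Finset.prod_insert (by simp [seg])]

theorem ins_val_pos {n : ℕ} (k : Fin (n + 1)) (v : Equiv.Perm (Fin n)) (t : Fin (n + 1))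
    (ht : t ≠ k) : 1 ≤ (ins k v t).val := by
  rcases Fin.eq_self_or_eq_succAbove k t with rfl | ⟨i, rfl⟩
  · exact absurd rfl ht
  · rw [ins_succAbove]; simp

theorem prod_seg_ne {n : ℕ} (k : ℕ) : (∏ x ∈ seg n k, (X x : MvPolynomial (Fin n) ℤ)) ≠ 0 :=
  Finset.prod_ne_zero_iff.mpr fun x _ => X_ne_zero x

theorem seg_map {n : ℕ} (k : Fin (n + 1)) (r : ℕ) (hr : r ≤ k.val) :
    (seg n r).map k.succAboveEmb = seg (n + 1) r := by
  ext x
  rw [mem_seg, Finset.mem_map]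
  constructor
  · rintro ⟨i, hi, rfl⟩
    rw [mem_seg] at hi
    simp only [Fin.succAboveEmb_apply, Fin.succAbove, Fin.lt_def, Fin.val_castSucc]
    split_ifs <;> simp <;> omega
  · intro hx
    rcases Fin.eq_self_or_eq_succAbove k x with rfl | ⟨i, rfl⟩
    · omega
    · refine ⟨i, ?_, rfl⟩
      rw [mem_seg]
      revert hx
      simp only [Fin.succAbove, Fin.lt_def, Fin.val_castSucc]
      split_ifs <;> simp <;> omega

theorem ev_map_prod {n : ℕ} {A : Type} [CommRing A] (k : Fin (n + 1)) (a : A) (g : Fin n → A)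
    (C : Finset (Fin n)) :
    ev k a g (∏ x ∈ C.map k.succAboveEmb, X x) = ∏ x ∈ C, g x := by
  rw [Finset.prod_map, map_prod]
  exact Finset.prod_congr rfl fun i _ => ev_succAbove k a g i

theorem exists_restrict {n : ℕ} {S : Equiv.Perm (Fin (n + 1)) → MvPolynomial (Fin (n + 1)) ℤ}
    (hS : IsSchubertFamily S) :
    ∃ S' : Equiv.Perm (Fin n) → MvPolynomial (Fin n) ℤ, IsSchubertFamily S' ∧
      ∀ v, ev (Fin.last n) 0 X (S (ins (Fin.last n) v)) = (∏ x ∈ seg n n, X x) * S' v := by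
  have hQ : ∀ v, ∃ Q, S (ins (Fin.last n) v) = (∏ x ∈ seg (n + 1) n, X x) * Q := by
    intro v
    have := schub_dvd hS 1 (ins (Fin.last n) v) n (fun t ht => ins_val_pos _ _ _ (by
      intro h; rw [h] at ht; simp at ht))
    rw [pow_one] at this
    exact this
  choose Q hQ using hQ
  refine ⟨fun v => ev (Fin.last n) 0 X (Q v), ⟨?_, ?_⟩, ?_⟩
  · have hrev : ins (Fin.last n) Fin.revPerm = Fin.revPerm := by
      refine perm_ext_ins (Fin.last n) _ _ ?_ ?_
      · rw [ins_self]; simp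
      · intro i
        rw [ins_succAbove]; simp [Fin.rev_castSucc]
    have h1 := hQ Fin.revPerm
    rw [hrev, hS.1] at h1
    have h2 : (∏ i : Fin (n + 1), (X i : MvPolynomial (Fin (n + 1)) ℤ) ^ (n + 1 - 1 - i.val)) =
        (∏ x ∈ seg (n + 1) n, X x) * ∏ i : Fin n, X i.castSucc ^ (n - 1 - i.val) := by
      rw [← seg_map (Fin.last n) n (by simp), Finset.prod_map, Fin.prod_univ_castSucc]
      have : seg n n = Finset.univ := by ext x; simp [seg]
      rw [this, ← Finset.prod_mul_distrib]
      simp only [Fin.val_last, Nat.add_sub_cancel, Nat.sub_self, pow_zero, mul_one]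
      refine Finset.prod_congr rfl fun i _ => ?_
      simp only [Fin.succAboveEmb_apply, Fin.succAbove_last, Fin.val_castSucc]
      rw [← pow_succ']
      congr 1
      omega
    rw [h2] at h1
    have h3 := mul_left_cancel₀ (prod_seg_ne n) h1
    beta_reduce
    rw [← h3, map_prod]
    refine Finset.prod_congr rfl fun i _ => ?_
    rw [map_pow, ← Fin.succAbove_last, ev_succAbove]
  · intro v i j hij hlt
    have hcs : ∀ x : Fin n, ins (Fin.last n) v x.castSucc = (v x).succ := by
      intro x; rw [← Fin.succAbove_last, ins_succAbove]
    have h := hS.2 (ins (Fin.last n) v) i.castSucc j.castSucc (by simpa using hij)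
      (by rw [hcs, hcs]; exact Fin.succ_lt_succ_iff.mpr hlt)
    have hmul : ins (Fin.last n) v * Equiv.swap i.castSucc j.castSucc =
        ins (Fin.last n) (v * Equiv.swap i j) := by
      refine perm_ext_ins (Fin.last n) _ _ ?_ ?_
      · rw [ins_self, Equiv.Perm.mul_apply, Equiv.swap_apply_of_ne_of_ne, ins_self]
        · exact (Fin.castSucc_lt_last i).ne'
        · exact (Fin.castSucc_lt_last j).ne'
      · intro x
        rw [ins_succAbove, Equiv.Perm.mul_apply, Equiv.Perm.mul_apply, Fin.succAbove_last,
          ← hcs, (Fin.castSucc_injective n).map_swap]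
    rw [hmul, hQ, hQ, map_mul, rename_mon, swp_seg (by simpa using hij) n (by simp; omega)] at h
    have h2 : (X i.castSucc - X j.castSucc) * Q v = Q (v * Equiv.swap i j) -
        rename (Equiv.swap i.castSucc j.castSucc) (Q (v * Equiv.swap i j)) := by
      apply mul_left_cancel₀ (prod_seg_ne (n := n + 1) n)
      linear_combination h
    have h3 := congrArg (ev (Fin.last n) 0 (X : Fin n → MvPolynomial (Fin n) ℤ)) h2
    have hcx : ∀ x : Fin n, ev (Fin.last n) 0 X (X x.castSucc) =
        (X x : MvPolynomial (Fin n) ℤ) := by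
      intro x; rw [← Fin.succAbove_last, ev_succAbove]
    have hcomm : ∀ T, ev (Fin.last n) 0 (X : Fin n → MvPolynomial (Fin n) ℤ)
        (rename (Equiv.swap i.castSucc j.castSucc) T) =
        rename (Equiv.swap i j) (ev (Fin.last n) 0 X T) := by
      intro T
      induction T using MvPolynomial.induction_on with
      | C a => simp
      | add p r hp hr => rw [map_add, map_add, map_add, map_add, hp, hr]
      | mul_X p x hp =>
        rw [map_mul, map_mul, map_mul, map_mul, hp, rename_X]
        congr 1
        rcases Fin.eq_self_or_eq_succAbove (Fin.last n) x with rfl | ⟨y, rfl⟩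
        · rw [Equiv.swap_apply_of_ne_of_ne, ev_self, map_zero]
          · exact (Fin.castSucc_lt_last i).ne'
          · exact (Fin.castSucc_lt_last j).ne'
        · rw [Fin.succAbove_last, ← (Fin.castSucc_injective n).map_swap, hcx, hcx, rename_X]
    rw [map_mul, map_sub, map_sub, hcx, hcx] at h3
    rw [h3]
    congr 1
    exact hcomm _
  · intro v
    rw [hQ, map_mul, ← seg_map (Fin.last n) n (by simp), ev_map_prod]

theorem schub_ev_zero {n : ℕ} {S : Equiv.Perm (Fin (n + 1)) → MvPolynomial (Fin (n + 1)) ℤ}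
    (hS : IsSchubertFamily S) {S' : Equiv.Perm (Fin n) → MvPolynomial (Fin n) ℤ}
    (hS' : ∀ v, ev (Fin.last n) 0 X (S (ins (Fin.last n) v)) = (∏ x ∈ seg n n, X x) * S' v)
    (v : Equiv.Perm (Fin n)) (k : Fin (n + 1)) :
    ev k 0 X (S (ins k v)) = (∏ x ∈ seg n k.val, X x) * S' v := by
  induction k using Fin.reverseInduction with
  | last => exact hS' v
  | cast k ih =>
    have h := schub_ev_step hS (0 : MvPolynomial (Fin n) ℤ) X k v
    have h0 : ev k.castSucc (0 : MvPolynomial (Fin n) ℤ) X (S (ins k.succ v)) = 0 := by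
      have h1 := schub_dvd hS 1 (ins k.succ v) (k.val + 1) (fun t ht => ins_val_pos _ _ _ (by
        intro h; rw [h] at ht; simp at ht))
      rw [pow_one] at h1
      have h2 : (X k.castSucc : MvPolynomial (Fin (n + 1)) ℤ) ∣ ∏ x ∈ seg (n + 1) (k.val + 1), X x :=
        Finset.dvd_prod_of_mem _ (by simp [mem_seg])
      obtain ⟨T, hT⟩ := h2.trans h1
      rw [hT, map_mul, ev_self, zero_mul]
    rw [h0, ih] at h
    simp only [Fin.val_succ, Fin.val_castSucc] at h ⊢
    rw [prod_seg_succ] at h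
    apply mul_left_cancel₀ (X_ne_zero (R := ℤ) k)
    linear_combination -h

theorem cnt_map {n : ℕ} (k : Fin (n + 1)) (C : Finset (Fin n)) (t : ℕ) :
    cnt (C.map k.succAboveEmb) t = cnt C (if t ≤ k.val then t else t - 1) := by
  unfold cnt
  rw [Finset.filter_map, Finset.card_map]
  congr 1
  ext x
  simp only [Finset.mem_filter, Function.comp_apply, Fin.succAboveEmb_apply]
  refine and_congr_right fun _ => ?_
  simp only [Fin.succAbove, Fin.lt_def, Fin.val_castSucc]
  split_ifs <;> simp <;> omega

theorem gale_map {n : ℕ} (k : Fin (n + 1)) (C E : Finset (Fin n)) :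
    GaleLE (C.map k.succAboveEmb) (E.map k.succAboveEmb) ↔ GaleLE C E := by
  rw [galeLE_iff, galeLE_iff]
  simp only [cnt_map, Finset.card_map]
  refine and_congr_right fun _ => ⟨fun h t => ?_, fun h t => h _⟩
  by_cases ht : t ≤ k.val
  · have := h t
    simpa [ht] using this
  · have := h (t + 1)
    rw [if_neg (by omega)] at this
    simpa using this

theorem ev_kap_map {n : ℕ} (k : Fin (n + 1)) (E : Finset (Fin n)) :
    ev k (0 : MvPolynomial (Fin n) ℤ) X (kap (E.map k.succAboveEmb)) = kap E := by
  classical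
  unfold kap
  rw [map_sum]
  symm
  refine Finset.sum_of_injOn (fun C => C.map k.succAboveEmb) ?_ ?_ ?_ ?_
  · intro C _ C' _ h
    exact Finset.map_injective _ h
  · intro C hC
    simp only [Finset.coe_filter, Finset.mem_univ, true_and, Set.mem_ofPred_eq] at hC ⊢
    exact (gale_map k C E).mpr hC
  · intro C hC hC2
    simp only [Finset.mem_filter, Finset.mem_univ, true_and] at hC
    have hk : k ∈ C := by
      by_contra hk
      apply hC2
      have hCe : (Finset.univ.filter (fun x => k.succAbove x ∈ C)).map k.succAboveEmb = C := by
        ext x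
        simp only [Finset.mem_map, Finset.mem_filter, Finset.mem_univ, true_and,
          Fin.succAboveEmb_apply]
        constructor
        · rintro ⟨y, hy, rfl⟩; exact hy
        · intro hx
          rcases Fin.eq_self_or_eq_succAbove k x with rfl | ⟨i, rfl⟩
          · exact absurd hx hk
          · exact ⟨i, hx, rfl⟩
      refine ⟨Finset.univ.filter (fun x => k.succAbove x ∈ C), ?_, hCe⟩
      simp only [Finset.coe_filter, Finset.mem_univ, true_and, Set.mem_ofPred_eq]
      rw [← gale_map k, hCe]
      exact hC
    rw [← Finset.mul_prod_erase C _ hk, map_mul, ev_self, zero_mul]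
  · intro C _
    exact (ev_map_prod k _ _ C).symm

theorem rothe_ins_zero {n : ℕ} (k : Fin (n + 1)) (v : Equiv.Perm (Fin n)) :
    rothe (ins k v) 0 = seg (n + 1) k.val := by
  ext x
  rw [mem_rothe, ins_symm_zero, mem_seg, ← Fin.lt_def]
  refine ⟨fun h => h.2, fun h => ⟨?_, h⟩⟩
  have := ins_val_pos k v x h.ne
  exact Fin.pos_iff_ne_zero.mpr (fun h0 => by rw [h0] at this; simp at this)

theorem rothe_ins_succ {n : ℕ} (k : Fin (n + 1)) (v : Equiv.Perm (Fin n)) (c : Fin n) :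
    rothe (ins k v) c.succ = (rothe v c).map k.succAboveEmb := by
  ext x
  rw [mem_rothe, ins_symm_succ, Finset.mem_map]
  rcases Fin.eq_self_or_eq_succAbove k x with rfl | ⟨i, rfl⟩
  · rw [ins_self]
    constructor
    · rintro ⟨h, _⟩
      rw [Fin.lt_def] at h; simp at h
    · rintro ⟨i, _, h⟩
      exact absurd h (Fin.succAbove_ne _ _)
  · rw [ins_succAbove, Fin.succ_lt_succ_iff, Fin.succAbove_lt_succAbove_iff]
    constructor
    · intro h
      exact ⟨i, (mem_rothe _ _ _).mpr h, rfl⟩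
    · rintro ⟨y, hy, h⟩
      have : y = i := Fin.succAbove_right_injective h
      subst this
      exact (mem_rothe _ _ _).mp hy

theorem prod_kap_ins {n : ℕ} (k : Fin (n + 1)) (v : Equiv.Perm (Fin n)) :
    ∏ c, kap (rothe (ins k v) c) = (∏ x ∈ seg (n + 1) k.val, X x) *
      ∏ c, kap ((rothe v c).map k.succAboveEmb) := by
  rw [Fin.prod_univ_succ, rothe_ins_zero, kap_seg]
  simp only [rothe_ins_succ]

theorem restrict_eq {n : ℕ} {S : Equiv.Perm (Fin (n + 1)) → MvPolynomial (Fin (n + 1)) ℤ}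
    (hS : IsSchubertFamily S) {S' : Equiv.Perm (Fin n) → MvPolynomial (Fin n) ℤ}
    (hS' : ∀ v, ev (Fin.last n) 0 X (S (ins (Fin.last n) v)) = (∏ x ∈ seg n n, X x) * S' v)
    (v : Equiv.Perm (Fin n)) (k : Fin (n + 1))
    (h : S (ins k v) = ∏ c, kap (rothe (ins k v) c)) : S' v = ∏ c, kap (rothe v c) := by
  have h1 := schub_ev_zero hS hS' v k
  rw [h, prod_kap_ins, map_mul, ← seg_map k k.val le_rfl, ev_map_prod, map_prod] at h1
  simp only [ev_kap_map] at h1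
  exact (mul_left_cancel₀ (prod_seg_ne k.val) h1).symm

/-! ## Dual number evaluation -/

/-- evaluation at `X k ↦ ε`, other variables to `1` -/
noncomputable def phi {n : ℕ} (k : Fin (n + 1)) :
    MvPolynomial (Fin (n + 1)) ℤ →ₐ[ℤ] DualNumber ℤ :=
  ev k DualNumber.eps (fun _ => 1)

theorem phi_mon_notMem {n : ℕ} (k : Fin (n + 1)) (C : Finset (Fin (n + 1))) (h : k ∉ C) :
    phi k (∏ x ∈ C, X x) = 1 := by
  rw [map_prod]
  refine Finset.prod_eq_one fun x hx => ?_
  rcases Fin.eq_self_or_eq_succAbove k x with rfl | ⟨i, rfl⟩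
  · exact absurd hx h
  · exact ev_succAbove _ _ _ _

theorem phi_mon_mem {n : ℕ} (k : Fin (n + 1)) (C : Finset (Fin (n + 1))) (h : k ∈ C) :
    phi k (∏ x ∈ C, X x) = DualNumber.eps := by
  rw [← Finset.mul_prod_erase C _ h, map_mul, phi_mon_notMem k _ (Finset.notMem_erase _ _), mul_one]
  exact ev_self _ _ _

theorem phi_mon_fst {n : ℕ} (k : Fin (n + 1)) (C : Finset (Fin (n + 1))) :
    0 ≤ (phi k (∏ x ∈ C, X x)).fst ∧ 0 ≤ (phi k (∏ x ∈ C, X x)).snd := by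
  by_cases h : k ∈ C
  · rw [phi_mon_mem k C h]; simp
  · rw [phi_mon_notMem k C h]; simp

theorem phi_kap_pos {n : ℕ} (k : Fin (n + 1)) (E : Finset (Fin n)) :
    1 ≤ (phi k (kap (E.map k.succAboveEmb))).fst ∧
      0 ≤ (phi k (kap (E.map k.succAboveEmb))).snd := by
  classical
  unfold kap
  rw [map_sum, TrivSqZeroExt.fst_sum, TrivSqZeroExt.snd_sum]
  constructor
  · have h1 : (phi k (∏ x ∈ E.map k.succAboveEmb, X x)).fst = 1 := by
      rw [phi_mon_notMem]
      · simp
      · simp only [Finset.mem_map, Fin.succAboveEmb_apply, not_exists, not_and]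
        intro x _
        exact Fin.succAbove_ne _ _
    rw [← h1]
    exact Finset.single_le_sum (f := fun C : Finset (Fin (n + 1)) => (phi k (∏ x ∈ C, X x)).fst)
      (fun C _ => (phi_mon_fst k C).1) (by simpa using gale_refl _)
  · exact Finset.sum_nonneg fun C _ => (phi_mon_fst k C).2

theorem dual_aux (A B : DualNumber ℤ) (h : (DualNumber.eps - 1) * A = -B) :
    A.fst = B.fst ∧ A.snd = B.snd + B.fst := by
  have h3 := congrArg TrivSqZeroExt.fst h
  have h4 := congrArg TrivSqZeroExt.snd h
  simp only [TrivSqZeroExt.fst_mul, TrivSqZeroExt.snd_mul, smul_eq_mul, TrivSqZeroExt.fst_sub,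
    TrivSqZeroExt.snd_sub, TrivSqZeroExt.fst_neg, TrivSqZeroExt.snd_neg, DualNumber.fst_eps,
    DualNumber.snd_eps, TrivSqZeroExt.fst_one, TrivSqZeroExt.snd_one,
    MulOpposite.smul_eq_mul_unop, MulOpposite.unop_op] at h3 h4
  obtain ⟨a1, a2⟩ := A
  obtain ⟨b1, b2⟩ := B
  simp only [TrivSqZeroExt.fst, TrivSqZeroExt.snd] at *
  constructor <;> linarith

theorem schub_phi_step {n : ℕ} {S : Equiv.Perm (Fin (n + 1)) → MvPolynomial (Fin (n + 1)) ℤ}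
    (hS : IsSchubertFamily S) (v : Equiv.Perm (Fin n)) (q' : Fin n) (hq : (v q').val = 0)
    (k : Fin n) (hk : k < q') :
    (phi k.castSucc (S (ins k.castSucc v))).fst = (phi k.succ (S (ins k.succ v))).fst ∧
    (phi k.castSucc (S (ins k.castSucc v))).snd = (phi k.succ (S (ins k.succ v))).snd +
      (phi k.succ (S (ins k.succ v))).fst := by
  have h := schub_ev_step hS (DualNumber.eps : DualNumber ℤ) (fun _ => 1) k v
  have h0 : ev k.castSucc (DualNumber.eps : DualNumber ℤ) (fun _ => 1) (S (ins k.succ v)) = 0 := by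
    have h1 := schub_dvd hS 2 (ins k.succ v) (k.val + 1) (fun t ht => by
      rcases Fin.eq_self_or_eq_succAbove k.succ t with rfl | ⟨i, rfl⟩
      · simp at ht
      · rw [ins_succAbove, Fin.val_succ]
        have hi : i ≠ q' := by
          rintro rfl
          rw [Fin.lt_def] at hk
          rw [Fin.succAbove_of_le_castSucc _ _ (by rw [Fin.le_def]; simpa using hk)] at ht
          simp at ht
          omega
        have : (v i).val ≠ 0 := by
          intro h'
          exact hi (v.injective (Fin.ext (by rw [h', hq])))
        omega)
    have h2 : (X k.castSucc : MvPolynomial (Fin (n + 1)) ℤ) ∣ ∏ x ∈ seg (n + 1) (k.val + 1), X x :=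
      Finset.dvd_prod_of_mem _ (by simp [mem_seg])
    obtain ⟨T, hT⟩ := (pow_dvd_pow_of_dvd h2 2).trans h1
    rw [hT, map_mul, map_pow, ev_self, pow_two, DualNumber.eps_mul_eps, zero_mul]
  rw [h0, zero_sub] at h
  exact dual_aux _ _ h

theorem schub_phi_chain {n : ℕ} {S : Equiv.Perm (Fin (n + 1)) → MvPolynomial (Fin (n + 1)) ℤ}
    (hS : IsSchubertFamily S) (v : Equiv.Perm (Fin n)) (q' : Fin n) (hq : (v q').val = 0)
    (q : Fin (n + 1)) (hqq : q.val ≤ q'.val) (d : ℕ) : ∀ m : Fin (n + 1), m.val + d = q.val →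
    (phi m (S (ins m v))).fst = (phi q (S (ins q v))).fst ∧
    (phi m (S (ins m v))).snd = (phi q (S (ins q v))).snd + d * (phi q (S (ins q v))).fst := by
  induction d with
  | zero =>
    intro m hm
    obtain rfl : m = q := Fin.ext (by omega)
    simp
  | succ d ih =>
    intro m hm
    have hmn : m.val < n := by omega
    obtain ⟨k, rfl⟩ : ∃ k : Fin n, m = k.castSucc := ⟨⟨m.val, hmn⟩, rfl⟩
    simp only [Fin.val_castSucc] at hm
    obtain ⟨h1, h2⟩ := ih k.succ (by simp; omega)
    obtain ⟨h3, h4⟩ := schub_phi_step hS v q' hq k (by rw [Fin.lt_def]; omega)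
    refine ⟨by rw [h3, h1], ?_⟩
    rw [h4, h2, h1]
    push_cast
    ring

theorem map_castSucc_eq {n : ℕ} (k : Fin n) (E : Finset (Fin n)) :
    E.map k.castSucc.succAboveEmb = swp k.castSucc k.succ (E.map k.succ.succAboveEmb) := by
  ext x
  rw [mem_swp]
  simp only [Finset.mem_map, Fin.succAboveEmb_apply]
  refine exists_congr fun i => and_congr_right fun _ => ?_
  rw [Equiv.swap_comm, ← Equiv.symm_apply_eq, Equiv.symm_swap]
  have : Equiv.swap k.succ k.castSucc (k.succ.succAbove i) = k.castSucc.succAbove i := by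
    by_cases h : i = k
    · subst h
      rw [Fin.succAbove_succ_self, Equiv.swap_apply_right, Fin.succAbove_castSucc_self]
    · have h1 : k.succ.succAbove i = k.castSucc.succAbove i := by
        have hv : i.val ≠ k.val := fun h' => h (Fin.ext h')
        simp only [Fin.succAbove, Fin.ext_iff, Fin.lt_def, Fin.val_castSucc, Fin.val_succ]
        split_ifs <;> simp <;> omega
      rw [Equiv.swap_apply_of_ne_of_ne, h1]
      · exact Fin.succAbove_ne _ _
      · rw [h1]; exact Fin.succAbove_ne _ _
  rw [this]

theorem col_step {n : ℕ} (k : Fin n) (E : Finset (Fin n)) :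
    (phi k.castSucc (kap (E.map k.castSucc.succAboveEmb))).fst =
      (phi k.succ (kap (E.map k.succ.succAboveEmb))).fst ∧
    (phi k.succ (kap (E.map k.succ.succAboveEmb))).snd + (if k ∈ E then 1 else 0) ≤
      (phi k.castSucc (kap (E.map k.castSucc.succAboveEmb))).snd := by
  classical
  have hij : k.castSucc.val + 1 = k.succ.val := by simp
  have hnot : k.castSucc ∉ E.map k.castSucc.succAboveEmb := by
    simp only [Finset.mem_map, Fin.succAboveEmb_apply, not_exists, not_and]
    intro x _
    exact Fin.succAbove_ne _ _
  have hj : k.succ ∉ E.map k.succ.succAboveEmb := by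
    simp only [Finset.mem_map, Fin.succAboveEmb_apply, not_exists, not_and]
    intro x _
    exact Fin.succAbove_ne _ _
  have hsym := kap_symm hij (fun h => absurd h hnot)
  have h1 : phi k.castSucc (kap (E.map k.castSucc.succAboveEmb)) =
      phi k.succ (kap (E.map k.castSucc.succAboveEmb)) := by
    conv_lhs => rw [← hsym]
    exact ev_swap k _ _ _
  rw [h1, map_castSucc_eq]
  have hmem : k.castSucc ∈ E.map k.succ.succAboveEmb ↔ k ∈ E := by
    rw [← Fin.succAbove_succ_self]
    exact Finset.mem_map' k.succ.succAboveEmb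
  set F := E.map k.succ.succAboveEmb with hF
  by_cases hk : k ∈ E
  · have hi := hmem.mpr hk
    have hsum : kap (swp k.castSucc k.succ F) = kap F + ∑ C ∈ Finset.univ.filter
        (fun C => GaleLE C (swp k.castSucc k.succ F) ∧ ¬ GaleLE C F), ∏ i ∈ C, X i := by
      unfold kap
      rw [← Finset.sum_filter_add_sum_filter_not
        (Finset.univ.filter (fun C => GaleLE C (swp k.castSucc k.succ F))) (fun C => GaleLE C F)]
      congr 1
      · refine Finset.sum_congr ?_ (fun _ _ => rfl)
        ext C
        simp only [Finset.mem_filter, Finset.mem_univ, true_and]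
        exact ⟨fun h => h.2, fun h => ⟨(gale_swp_of_bad hij hi hj C).1 h, h⟩⟩
      · rw [Finset.filter_filter]
    have hB : phi k.succ (∑ C ∈ Finset.univ.filter
        (fun C => GaleLE C (swp k.castSucc k.succ F) ∧ ¬ GaleLE C F), ∏ i ∈ C, X i) =
        ∑ C ∈ Finset.univ.filter
        (fun C => GaleLE C (swp k.castSucc k.succ F) ∧ ¬ GaleLE C F), DualNumber.eps := by
      rw [map_sum]
      refine Finset.sum_congr rfl fun C hC => ?_
      simp only [Finset.mem_filter, Finset.mem_univ, true_and] at hC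
      exact phi_mon_mem _ _ ((gale_swp_of_bad hij hi hj C).2 hC.1 hC.2).2
    have hcard : 1 ≤ (Finset.univ.filter
        (fun C => GaleLE C (swp k.castSucc k.succ F) ∧ ¬ GaleLE C F)).card := by
      rw [Nat.one_le_iff_ne_zero, Finset.card_ne_zero]
      refine ⟨swp k.castSucc k.succ F, ?_⟩
      simp only [Finset.mem_filter, Finset.mem_univ, true_and]
      refine ⟨gale_refl _, fun h => ?_⟩
      rw [galeLE_iff] at h
      have h2 := h.2 (k.castSucc.val + 1)
      rw [cnt_succ, cnt_succ, cnt_swp _ _ hij _ _ (by omega), if_pos hi, if_neg] at h2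
      · omega
      · rw [mem_swp, Equiv.swap_apply_left]; exact hj
    rw [hsum, map_add, hB, Finset.sum_const, if_pos hk]
    constructor
    · simp
    · simp
      exact Finset.card_pos.mp hcard
  · have hi : k.castSucc ∉ F := fun h => hk (hmem.mp h)
    have : swp k.castSucc k.succ F = F := by
      ext x
      rw [mem_swp]
      by_cases h1 : x = k.castSucc
      · subst h1; rw [Equiv.swap_apply_left]; exact iff_of_false hj hi
      · by_cases h2 : x = k.succ
        · subst h2; rw [Equiv.swap_apply_right]; exact iff_of_false hi hj
        · rw [Equiv.swap_apply_of_ne_of_ne h1 h2]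
    rw [this, if_neg hk]
    simp

theorem col_chain {n : ℕ} (E : Finset (Fin n)) (q : Fin (n + 1)) (d : ℕ) :
    ∀ m : Fin (n + 1), m.val + d = q.val →
    (phi m (kap (E.map m.succAboveEmb))).fst = (phi q (kap (E.map q.succAboveEmb))).fst ∧
    (phi q (kap (E.map q.succAboveEmb))).snd + cnt E q.val ≤
      (phi m (kap (E.map m.succAboveEmb))).snd + cnt E m.val := by
  induction d with
  | zero =>
    intro m hm
    obtain rfl : m = q := Fin.ext (by omega)
    simp
  | succ d ih =>
    intro m hm
    have hmn : m.val < n := by omega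
    obtain ⟨k, rfl⟩ : ∃ k : Fin n, m = k.castSucc := ⟨⟨m.val, hmn⟩, rfl⟩
    simp only [Fin.val_castSucc] at hm
    obtain ⟨h1, h2⟩ := ih k.succ (by simp; omega)
    obtain ⟨h3, h4⟩ := col_step k E
    refine ⟨by rw [h3, h1], ?_⟩
    rw [Fin.val_succ, cnt_succ] at h2
    rw [Fin.val_castSucc]
    push_cast at h2
    linarith

theorem cnt_mono {n : ℕ} (E : Finset (Fin n)) {s t : ℕ} (h : s ≤ t) : cnt E s ≤ cnt E t := by
  unfold cnt
  refine Finset.card_le_card fun x hx => ?_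
  simp only [Finset.mem_filter] at hx ⊢
  exact ⟨hx.1, by omega⟩

theorem prod_dual {ι : Type} (s : Finset ι) (y z : ι → DualNumber ℤ)
    (h : ∀ c ∈ s, (z c).fst = (y c).fst ∧ 1 ≤ (y c).fst ∧ 0 ≤ (y c).snd ∧ (y c).snd ≤ (z c).snd) :
    (∏ c ∈ s, z c).fst = (∏ c ∈ s, y c).fst ∧ 1 ≤ (∏ c ∈ s, y c).fst ∧
      0 ≤ (∏ c ∈ s, y c).snd ∧ (∏ c ∈ s, y c).snd ≤ (∏ c ∈ s, z c).snd := by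
  classical
  induction s using Finset.induction_on with
  | empty => simp
  | insert a s ha ih =>
    obtain ⟨i1, i2, i3, i4⟩ := ih fun c hc => h c (Finset.mem_insert_of_mem hc)
    obtain ⟨j1, j2, j3, j4⟩ := h a (Finset.mem_insert_self _ _)
    rw [Finset.prod_insert ha, Finset.prod_insert ha]
    simp only [TrivSqZeroExt.fst_mul, TrivSqZeroExt.snd_mul, smul_eq_mul,
      MulOpposite.smul_eq_mul_unop, MulOpposite.unop_op]
    refine ⟨by rw [i1, j1], by nlinarith, by positivity, ?_⟩
    rw [i1, j1]
    nlinarith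

theorem prod_dual_strict {ι : Type} [DecidableEq ι] (s : Finset ι) (y z : ι → DualNumber ℤ)
    (h : ∀ c ∈ s, (z c).fst = (y c).fst ∧ 1 ≤ (y c).fst ∧ 0 ≤ (y c).snd ∧ (y c).snd ≤ (z c).snd)
    (c : ι) (hc : c ∈ s) (hlt : (y c).snd < (z c).snd) :
    (∏ c ∈ s, y c).snd < (∏ c ∈ s, z c).snd := by
  rw [← Finset.mul_prod_erase s _ hc, ← Finset.mul_prod_erase s _ hc]
  obtain ⟨i1, i2, i3, i4⟩ := prod_dual (s.erase c) y z
    fun x hx => h x (Finset.mem_of_mem_erase hx)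
  obtain ⟨j1, j2, j3, j4⟩ := h c hc
  simp only [TrivSqZeroExt.snd_mul, smul_eq_mul, MulOpposite.smul_eq_mul_unop, MulOpposite.unop_op]
  rw [i1, j1]
  nlinarith

theorem phi_prod_ins {n : ℕ} (k : Fin (n + 1)) (v : Equiv.Perm (Fin n)) :
    phi k (∏ c, kap (rothe (ins k v) c)) = ∏ c, phi k (kap ((rothe v c).map k.succAboveEmb)) := by
  rw [prod_kap_ins, map_mul, phi_mon_notMem k _ (by rw [mem_seg]; omega), one_mul, map_prod]

theorem cnt_seg (n r t : ℕ) (htr : t ≤ r) (hr : r ≤ n) : cnt (seg n r) t = t := by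
  induction t with
  | zero => simp [cnt]
  | succ t ih =>
    have := cnt_succ (seg n r) ⟨t, by omega⟩
    simp only [mem_seg] at this
    rw [this, ih (by omega), if_pos (by omega)]

theorem rothe_min {n : ℕ} (v : Equiv.Perm (Fin n)) (q' : Fin n) (hq : (v q').val = 0) :
    rothe v (v q') = seg n q'.val := by
  ext x
  rw [mem_rothe, mem_seg, Equiv.symm_apply_apply, ← Fin.lt_def]
  refine ⟨fun h => h.2, fun h => ⟨?_, h⟩⟩
  have : (v x).val ≠ 0 := fun h' => h.ne (v.injective (Fin.ext (by rw [h', hq])))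
  rw [Fin.lt_def]; omega

theorem nec_key {n : ℕ} {S : Equiv.Perm (Fin (n + 1)) → MvPolynomial (Fin (n + 1)) ℤ}
    (hS : IsSchubertFamily S) (v : Equiv.Perm (Fin n)) (m : Fin (n + 1)) (q' : Fin n)
    (hq : (v q').val = 0) (hu : Av (ins q'.castSucc v)) (b : Fin n) (hmb : m.val ≤ b.val)
    (hbq : b < q') (c1 : Fin n) (hc1 : c1 ≠ v q') (hb : b ∈ rothe v c1)
    (h : S (ins m v) = ∏ c, kap (rothe (ins m v) c)) : False := by
  rw [Fin.lt_def] at hbq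
  obtain ⟨d, hd⟩ : ∃ d, m.val + d = q'.castSucc.val := ⟨q'.val - m.val, by simp; omega⟩
  have hY := schub_eq_of_av hS _ hu
  obtain ⟨e1, e2⟩ := schub_phi_chain hS v q' hq q'.castSucc (by simp) d m hd
  rw [h, hY, phi_prod_ins, phi_prod_ins] at e1 e2
  have hcol := fun c => col_chain (rothe v c) q'.castSucc d m hd
  have hpos := fun c => phi_kap_pos q'.castSucc (rothe v c)
  have hy0 : phi q'.castSucc (kap ((rothe v (v q')).map q'.castSucc.succAboveEmb)) = 1 := by
    rw [rothe_min v q' hq, seg_map _ _ (by simp), kap_seg, phi_mon_notMem]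
    rw [mem_seg]; simp
  have hz0 := hcol (v q')
  rw [hy0, rothe_min v q' hq, cnt_seg _ _ _ (by simp) (by omega),
    cnt_seg _ _ _ (by omega) (by omega), ← rothe_min v q' hq] at hz0
  set y : Fin n → DualNumber ℤ :=
    fun c => phi q'.castSucc (kap ((rothe v c).map q'.castSucc.succAboveEmb)) with hy
  set z : Fin n → DualNumber ℤ := fun c => phi m (kap ((rothe v c).map m.succAboveEmb)) with hz
  have hyz : ∀ c ∈ Finset.univ.erase (v q'), (z c).fst = (y c).fst ∧ 1 ≤ (y c).fst ∧
      0 ≤ (y c).snd ∧ (y c).snd ≤ (z c).snd := by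
    intro c _
    refine ⟨(hcol c).1, (hpos c).1, (hpos c).2, ?_⟩
    have h1 := (hcol c).2
    have h2 := cnt_mono (rothe v c) (show m.val ≤ q'.castSucc.val by omega)
    have h3 : (cnt (rothe v c) m.val : ℤ) ≤ cnt (rothe v c) q'.castSucc.val := by exact_mod_cast h2
    have h4 : (y c).snd + cnt (rothe v c) q'.castSucc.val ≤ (z c).snd + cnt (rothe v c) m.val := h1
    linarith
  have hstrict : (y c1).snd < (z c1).snd := by
    have h1 := (hcol c1).2
    have h2 := cnt_mono (rothe v c1) hmb
    have h5 := cnt_mono (rothe v c1) (show b.val + 1 ≤ q'.castSucc.val by simp; omega)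
    rw [cnt_succ, if_pos hb] at h5
    have h3 : (cnt (rothe v c1) m.val : ℤ) + 1 ≤ cnt (rothe v c1) q'.castSucc.val := by
      exact_mod_cast (by omega : cnt (rothe v c1) m.val + 1 ≤ cnt (rothe v c1) q'.castSucc.val)
    have h4 : (y c1).snd + cnt (rothe v c1) q'.castSucc.val ≤
      (z c1).snd + cnt (rothe v c1) m.val := h1
    linarith
  have hlt := prod_dual_strict _ y z hyz c1 (by simp [hc1]) hstrict
  obtain ⟨p1, p2, p3, p4⟩ := prod_dual _ y z hyz
  have e3 : (∏ c, z c).snd = (∏ c, y c).snd + d * (∏ c, y c).fst := e2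
  rw [← Finset.mul_prod_erase _ y (Finset.mem_univ (v q')),
    ← Finset.mul_prod_erase _ z (Finset.mem_univ (v q'))] at e3
  have hy0' : y (v q') = 1 := hy0
  have hz1 : (z (v q')).fst = 1 := by
    have := hz0.1
    rw [TrivSqZeroExt.fst_one] at this
    exact this
  have hz2 : (d : ℤ) ≤ (z (v q')).snd := by
    have h1 := hz0.2
    rw [TrivSqZeroExt.snd_one, zero_add] at h1
    have h2 : (q'.castSucc.val : ℤ) ≤ (z (v q')).snd + m.val := h1
    rw [← hd] at h2
    push_cast at h2
    linarith
  rw [hy0', one_mul, TrivSqZeroExt.snd_mul, hz1, p1] at e3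
  simp only [smul_eq_mul, MulOpposite.smul_eq_mul_unop, MulOpposite.unop_op, one_mul] at e3
  nlinarith

theorem av_ins_of_av {n : ℕ} (v : Equiv.Perm (Fin n)) (q' : Fin n) (hq : (v q').val = 0)
    (hv : Av v) : Av (ins q'.castSucc v) := by
  have hlt : ∀ i j : Fin n, ins q'.castSucc v (q'.castSucc.succAbove i) <
      ins q'.castSucc v (q'.castSucc.succAbove j) ↔ v i < v j := by
    intro i j
    rw [ins_succAbove, ins_succAbove, Fin.succ_lt_succ_iff]
  have hne : ∀ x y, ins q'.castSucc v x < ins q'.castSucc v y → y ≠ q'.castSucc := by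
    rintro x y hxy rfl
    rw [ins_self] at hxy
    exact absurd hxy (Fin.not_lt_zero _)
  intro a b c d hab hbc hbd hcd h1 h2 h3 h4
  obtain ⟨b', rfl⟩ := Fin.exists_succAbove_eq (hne _ _ h3)
  obtain ⟨c', rfl⟩ := Fin.exists_succAbove_eq (hne _ _ h1)
  obtain ⟨d', rfl⟩ := Fin.exists_succAbove_eq (hne _ _ h2)
  rw [hlt] at h3 h4
  rw [Fin.succAbove_lt_succAbove_iff] at hbc hbd
  have hcd' : c' ≠ d' := fun h => hcd (by rw [h])
  rcases Fin.eq_self_or_eq_succAbove q'.castSucc a with rfl | ⟨a', rfl⟩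
  · have hle : q' ≤ b' := by
      have := (Fin.lt_succAbove_iff_le_castSucc q'.castSucc b').mp hab
      simpa using this
    have hmin : ∀ x, x ≠ q' → v q' < v x := by
      intro x hx
      have : (v x).val ≠ 0 := fun h' => hx (v.injective (Fin.ext (by rw [h', hq])))
      rw [Fin.lt_def]; omega
    have hbq : b' ≠ q' := by
      rintro rfl
      rw [Fin.lt_def] at h3; omega
    exact hv q' b' c' d' (lt_of_le_of_ne hle hbq.symm) hbc hbd hcd'
      (hmin _ (lt_of_le_of_lt hle hbc).ne') (hmin _ (lt_of_le_of_lt hle hbd).ne') h3 h4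
  · rw [hlt] at h1 h2
    rw [Fin.succAbove_lt_succAbove_iff] at hab
    exact hv a' b' c' d' hab hbc hbd hcd' h1 h2 h3 h4

theorem av_of_schub_eq (n : ℕ) : ∀ S : Equiv.Perm (Fin n) → MvPolynomial (Fin n) ℤ,
    IsSchubertFamily S → ∀ w, S w = ∏ c, kap (rothe w c) → Av w := by
  induction n with
  | zero => intro S _ w _ a; exact a.elim0
  | succ n ih =>
    intro S hS w h
    obtain ⟨S', hS', hres⟩ := exists_restrict hS
    obtain ⟨v, hv⟩ := exists_ins w (w.symm 0) (by simp)
    set m := w.symm 0 with hm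
    clear_value m
    subst hv
    have hav : Av v := ih S' hS' v (restrict_eq hS hres v m h)
    have hlt : ∀ i j : Fin n, ins m v (m.succAbove i) < ins m v (m.succAbove j) ↔ v i < v j := by
      intro i j
      rw [ins_succAbove, ins_succAbove, Fin.succ_lt_succ_iff]
    have hne : ∀ x y, ins m v x < ins m v y → y ≠ m := by
      rintro x y hxy rfl
      rw [ins_self] at hxy
      exact absurd hxy (Fin.not_lt_zero _)
    intro a b c d hab hbc hbd hcd h1 h2 h3 h4
    obtain ⟨b', rfl⟩ := Fin.exists_succAbove_eq (hne _ _ h3)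
    obtain ⟨c', rfl⟩ := Fin.exists_succAbove_eq (hne _ _ h1)
    obtain ⟨d', rfl⟩ := Fin.exists_succAbove_eq (hne _ _ h2)
    rw [hlt] at h3 h4
    rw [Fin.succAbove_lt_succAbove_iff] at hbc hbd
    have hcd' : c' ≠ d' := fun h => hcd (by rw [h])
    rcases Fin.eq_self_or_eq_succAbove m a with rfl | ⟨a', rfl⟩
    · have hle : a.val ≤ b'.val := by
        have := (Fin.lt_succAbove_iff_le_castSucc a b').mp hab
        rw [Fin.le_def] at this
        simpa using this
      have hn : 0 < n := by have := b'.isLt; omega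
      obtain ⟨q', hq⟩ : ∃ q', (v q').val = 0 := ⟨v.symm ⟨0, hn⟩, by simp⟩
      have hmin : ∀ x, x ≠ q' → v q' < v x := by
        intro x hx
        have : (v x).val ≠ 0 := fun h' => hx (v.injective (Fin.ext (by rw [h', hq])))
        rw [Fin.lt_def]; omega
      have hbq : b' ≠ q' := by
        rintro rfl
        rw [Fin.lt_def] at h3; omega
      have hbq2 : b' < q' := by
        by_contra hcon
        have hqb : q' < b' := lt_of_le_of_ne (not_lt.mp hcon) hbq.symm
        exact hav q' b' c' d' hqb hbc hbd hcd' (hmin _ (hqb.trans hbc).ne')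
          (hmin _ (hqb.trans hbd).ne') h3 h4
      have hfin : ∀ e, e ≠ q' → b' < e → v e < v b' → False := by
        intro e he hbe hve
        refine nec_key hS v a q' hq (av_ins_of_av v q' hq hav) b' hle hbq2 (v e)
          (fun h' => he (v.injective h')) ?_ h
        rw [mem_rothe, Equiv.symm_apply_apply]
        exact ⟨hve, hbe⟩
      by_cases hc : c' = q'
      · exact hfin d' (fun h' => hcd' (by rw [hc, h'])) hbd h4
      · exact hfin c' hc hbc h3
    · rw [hlt] at h1 h2
      rw [Fin.succAbove_lt_succAbove_iff] at hab
      exact hav a' b' c' d' hab hbc hbd hcd' h1 h2 h3 h4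

theorem contains_of {n : ℕ} (w : Equiv.Perm (Fin n)) (π : Fin 4 → ℕ) (p : Fin 4 → Fin n)
    (hp : StrictMono p) (h : ∀ s t : Fin 4, π s < π t ↔ w (p s) < w (p t)) :
    ContainsPattern w π :=
  ⟨OrderEmbedding.ofStrictMono p hp, h⟩

theorem av_iff {n : ℕ} (w : Equiv.Perm (Fin n)) :
    Av w ↔ (AvoidsPattern w ![1, 4, 3, 2] ∧ AvoidsPattern w ![1, 4, 2, 3]) := by
  constructor
  · intro h
    constructor
    · rintro ⟨f, hf⟩
      exact h (f 0) (f 1) (f 2) (f 3) (f.strictMono (by decide)) (f.strictMono (by decide))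
        (f.strictMono (by decide)) (f.strictMono (by decide)).ne
        ((hf 0 2).mp (by decide)) ((hf 0 3).mp (by decide)) ((hf 2 1).mp (by decide))
        ((hf 3 1).mp (by decide))
    · rintro ⟨f, hf⟩
      exact h (f 0) (f 1) (f 2) (f 3) (f.strictMono (by decide)) (f.strictMono (by decide))
        (f.strictMono (by decide)) (f.strictMono (by decide)).ne
        ((hf 0 2).mp (by decide)) ((hf 0 3).mp (by decide)) ((hf 2 1).mp (by decide))
        ((hf 3 1).mp (by decide))
  · rintro ⟨ha, hb⟩
    have key : ∀ a b c d : Fin n, a < b → b < c → c < d → w a < w c → w a < w d → w c < w b →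
        w d < w b → False := by
      intro a b c d hab hbc hcd h1 h2 h3 h4
      have hp : StrictMono ![a, b, c, d] := by
        rw [Fin.strictMono_iff_lt_succ]
        intro i
        fin_cases i <;> simpa
      have h5 : w c ≠ w d := fun h' => hcd.ne (w.injective h')
      rcases lt_or_gt_of_ne h5 with h6 | h6
      · refine hb (contains_of w _ ![a, b, c, d] hp ?_)
        intro s t
        fin_cases s <;> fin_cases t <;> simp <;> order
      · refine ha (contains_of w _ ![a, b, c, d] hp ?_)
        intro s t
        fin_cases s <;> fin_cases t <;> simp <;> order
    intro a b c d hab hbc hbd hcd h1 h2 h3 h4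
    rcases lt_or_gt_of_ne hcd with h5 | h5
    · exact key a b c d hab hbc h5 h1 h2 h3 h4
    · exact key a b d c hab hbd h5 h2 h1 h4 h3

/-- **Theorem (Fan–Guo).** The Schubert polynomial `S_w` equals the upper bound `Max_w`
if and only if `w` avoids the patterns 1432 and 1423. -/
theorem schubert_eq_max_iff_avoids_1432_1423 (n : ℕ) (hn : 1 ≤ n) (w : Equiv.Perm (Fin n))
    (S : Equiv.Perm (Fin n) → MvPolynomial (Fin n) ℤ) (hS : IsSchubertFamily S) :
    S w = MaxPoly (rothe w) ↔
      (AvoidsPattern w ![1, 4, 3, 2] ∧ AvoidsPattern w ![1, 4, 2, 3]) := by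
  rw [maxPoly_eq, ← av_iff]
  exact ⟨av_of_schub_eq n S hS w, schub_eq_of_av hS w⟩
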